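/- Let n ≥ 1 and let x_i, a_i, b_i, c_i, d_i (1≤i≤2n) be variables and t an indeterminate. Then Pf[ (a_i b_j − a_j b_i)(c_i d_j − c_j d_i) / ((x_i − x_j)(1 − t x_i x_j)) ]_{1≤i<j≤2n} = V^n(X, 1+tX^2; A, B) · V^n(X, 1+tX^2; C, D) / Π_{1≤i<j≤2n}(x_i − x_j)(1 − t x_i x_j). -/

import Mathlib

open Finset

def pfMatchings (n : ℕ) : Finset (Equiv.Perm (Fin (2 * n))) :=
  Finset.univ.filter (fun σ =>
    (∀ i : Fin n, σ ⟨2 * i.1, by have := i.2; omega⟩ < σ ⟨2 * i.1 + 1, by have := i.2; omega⟩) ∧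
    (∀ i j : Fin n, i < j →
      σ ⟨2 * i.1, by have := i.2; omega⟩ < σ ⟨2 * j.1, by have := j.2; omega⟩))

def pf {R : Type*} [CommRing R] {n : ℕ} (A : Matrix (Fin (2 * n)) (Fin (2 * n)) R) : R :=
  ∑ σ ∈ pfMatchings n,
    ((Equiv.Perm.sign σ : ℤ) : R) *
      ∏ i : Fin n,
        A (σ ⟨2 * i.1, by have := i.2; omega⟩) (σ ⟨2 * i.1 + 1, by have := i.2; omega⟩)

/-- `V^n(X,Y;A,B)`: the determinant of the `2n × 2n` matrix whose `(i,j)` entry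
(0-indexed columns) is `a_i x_i^{n−1−j} y_i^j` for `j < n` and
`b_i x_i^{2n−1−j} y_i^{j−n}` for `n ≤ j < 2n`. -/
def Vdet {R : Type*} [CommRing R] (n : ℕ) (x y a b : Fin (2 * n) → R) : R :=
  Matrix.det (Matrix.of fun i j : Fin (2 * n) =>
    if (j : ℕ) < n then a i * x i ^ (n - 1 - (j : ℕ)) * y i ^ (j : ℕ)
    else b i * x i ^ (2 * n - 1 - (j : ℕ)) * y i ^ ((j : ℕ) - n))

/-!
For arbitrary `y`, both sides satisfy the same recursion, a sum over `j` in which the rows `0` and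
`j + 1` are deleted. For the Pfaffian this is the expansion along the first row. On the right,
`V^{n+1}(X,Y;A,B) V^{n+1}(X,Y;C,D)` is a binary form of degree `2n` in `(x_0, y_0)`, hence given by
Lagrange interpolation from its values at the other `2n + 1` points `(x_j, y_j)`. At such a point
two rows of each determinant involve the same `x` and `y`, and `V^{n+1}` collapses to a multiple of
the `V^n` without these rows. For `y_i = 1 + t x_i^2` the minors `x_i y_j - x_j y_i` factor as
`(x_i - x_j)(1 - t x_i x_j)`.
-/

/-- The increasing enumeration of the indices other than `0` and `j + 1`: composing with it deletes
the two rows that a Pfaffian expansion removes. -/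
def skipPair {N : ℕ} (j : Fin (N + 1)) (k : Fin N) : Fin (N + 2) :=
  (j.succAbove k).succ

section SkipPair

variable {N : ℕ} (j : Fin (N + 1))

lemma skipPair_strictMono : StrictMono (skipPair j) :=
  (Fin.strictMono_succ).comp (Fin.strictMono_succAbove j)

lemma skipPair_ne_zero (k : Fin N) : skipPair j k ≠ 0 :=
  Fin.succ_ne_zero _

lemma skipPair_ne_succ (k : Fin N) : skipPair j k ≠ j.succ :=
  fun h => Fin.succAbove_ne j k (Fin.succ_injective _ h)

/-- The indices of `Fin (N + 2)` with `0` and `j + 1` moved to the end. -/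
noncomputable def skipPairEquiv : Fin N ⊕ Fin 2 ≃ Fin (N + 2) :=
  Equiv.ofBijective (Sum.elim (skipPair j) ![0, j.succ]) <| by
    refine (Fintype.bijective_iff_injective_and_card _).2 ⟨?_, by simp⟩
    refine (skipPair_strictMono j).injective.sumElim ?_ fun k i => ?_
    · simp [Function.Injective, Fin.forall_fin_two, (Fin.succ_ne_zero j).symm]
    · fin_cases i
      exacts [skipPair_ne_zero j k, skipPair_ne_succ j k]

lemma prod_Ioi_eq_skipPair {R : Type*} [CommRing R] (w : Fin (N + 2) → Fin (N + 2) → R)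
    (hw : ∀ i k, w i k = -w k i) :
    ∏ i, ∏ k ∈ Ioi i, w i k =
      (-1) ^ (j : ℕ) * w 0 j.succ * (∏ k, w 0 (skipPair j k)) * (∏ k, w j.succ (skipPair j k)) *
        ∏ i, ∏ k ∈ Ioi i, w (skipPair j i) (skipPair j k) := by
  have move_front := Equiv.Perm.prod_Ioi_comp_eq_sign_mul_prod j.cycleRange.symm
    (f := fun i k => w i.succ k.succ) fun i k => hw i.succ k.succ
  rw [Fin.prod_univ_succ] at move_front
  simp only [Fin.prod_Ioi_succ, Fin.prod_Ioi_zero, Fin.cycleRange_symm_zero,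
    Fin.cycleRange_symm_succ, Equiv.Perm.sign_symm, Fin.sign_cycleRange] at move_front
  have sign_sq : ((-1 : R) ^ (j : ℕ)) * (-1) ^ (j : ℕ) = 1 := by simp [← mul_pow]
  rw [Fin.prod_univ_succ, Fin.prod_Ioi_zero, Fin.prod_univ_succAbove _ j]
  simp only [Fin.prod_Ioi_succ, skipPair]
  push_cast at move_front
  linear_combination (-w 0 j.succ * (∏ k, w 0 (j.succAbove k).succ) * (-1) ^ (j : ℕ)) * move_front
    - w 0 j.succ * (∏ k, w 0 (j.succAbove k).succ) *
      (∏ i : Fin (N + 1), ∏ k ∈ Ioi i, w i.succ k.succ) * sign_sq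

lemma neg_one_pow_mul_div_mul_div_prod_Ioi_skipPair {F : Type*} [Field F]
    (w : Fin (N + 2) → Fin (N + 2) → F) (hw : ∀ i k, w i k = -w k i)
    (hw₀ : Pairwise fun i k => w i k ≠ 0) (r s : F) :
    (-1) ^ (j : ℕ) * (r / w 0 j.succ) * (s / ∏ i, ∏ k ∈ Ioi i, w (skipPair j i) (skipPair j k)) =
      r * s * (∏ k, w j.succ (skipPair j k)) * (∏ k, w 0 (skipPair j k)) /
        ∏ i, ∏ k ∈ Ioi i, w i k := by
  have prod_zero_ne : ∏ k, w 0 (skipPair j k) ≠ 0 :=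
    prod_ne_zero_iff.2 fun k _ => hw₀ (skipPair_ne_zero j k).symm
  have prod_succ_ne : ∏ k, w j.succ (skipPair j k) ≠ 0 :=
    prod_ne_zero_iff.2 fun k _ => hw₀ (skipPair_ne_succ j k).symm
  rw [prod_Ioi_eq_skipPair j w hw]
  rcases neg_one_pow_eq_or F (j : ℕ) with hj | hj <;> rw [hj] <;> field_simp

end SkipPair

section PfaffianExpansion

/-- The permutation sending `0` to `0` and `1` to `j + 1`, and acting on the other indices by `τ`
transported along `skipPair j`: the matching `τ` with the pair `{0, j + 1}` put in front. -/
def consPair {N : ℕ} (j : Fin (N + 1)) (τ : Equiv.Perm (Fin N)) : Equiv.Perm (Fin (N + 2)) :=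
  Equiv.Perm.decomposeFin.symm (0, j.cycleRange.symm * Equiv.Perm.decomposeFin.symm (0, τ))

section

variable {N : ℕ} (j : Fin (N + 1)) (τ : Equiv.Perm (Fin N))

lemma consPair_zero : consPair j τ 0 = 0 :=
  Equiv.Perm.decomposeFin_symm_apply_zero _ _

lemma consPair_one : consPair j τ 1 = j.succ := by
  rw [← Fin.succ_zero_eq_one, consPair, Equiv.Perm.decomposeFin_symm_apply_succ]
  simp

lemma consPair_succ_succ (i : Fin N) : consPair j τ i.succ.succ = skipPair j (τ i) := by
  rw [consPair, Equiv.Perm.decomposeFin_symm_apply_succ]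
  simp [skipPair]

lemma sign_consPair :
    Equiv.Perm.sign (consPair j τ) = (-1) ^ (j : ℕ) * Equiv.Perm.sign τ := by
  simp [consPair, Equiv.Perm.decomposeFin.symm_sign, Fin.sign_cycleRange]

lemma consPair_injective2 : Function.Injective2 (consPair (N := N)) := by
  intro j j' τ τ' h
  obtain rfl : j = j' := by
    simpa only [consPair_one, Fin.succ_inj] using Equiv.congr_fun h 1
  refine ⟨rfl, Equiv.ext fun i => (skipPair_strictMono j).injective ?_⟩
  simpa only [consPair_succ_succ] using Equiv.congr_fun h i.succ.succ

lemma exists_eq_consPair {σ : Equiv.Perm (Fin (N + 2))} (hσ : σ 0 = 0) :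
    ∃ j τ, σ = consPair j τ := by
  obtain ⟨⟨p, ρ⟩, rfl⟩ := Equiv.Perm.decomposeFin.symm.surjective σ
  obtain rfl : p = 0 := by simpa using hσ
  obtain ⟨⟨q, τ⟩, hτ⟩ := Equiv.Perm.decomposeFin.symm.surjective ((ρ 0).cycleRange * ρ)
  obtain rfl : q = 0 := by
    rw [← Equiv.Perm.decomposeFin_symm_apply_zero q τ, hτ]
    simp
  refine ⟨ρ 0, τ, ?_⟩
  rw [consPair, hτ, ← mul_assoc, ← Equiv.Perm.inv_def, inv_mul_cancel, one_mul]

end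

variable {n : ℕ}

lemma apply_zero_of_mem_pfMatchings {σ : Equiv.Perm (Fin (2 * n + 2))}
    (hσ : σ ∈ pfMatchings (n + 1)) : σ 0 = 0 := by
  obtain ⟨hpair, hfirst⟩ := (mem_filter.1 hσ).2
  obtain ⟨⟨k, hk⟩, hk0⟩ := σ.surjective 0
  rcases Nat.even_or_odd' k with ⟨i, rfl | rfl⟩
  · rcases Nat.eq_zero_or_pos i with rfl | hi
    · exact hk0
    · have := hfirst 0 ⟨i, by omega⟩ hi
      exact absurd (this.trans_eq hk0) (Fin.not_lt_zero _)
  · have := hpair ⟨i, by omega⟩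
    exact absurd (this.trans_eq hk0) (Fin.not_lt_zero _)

lemma consPair_two_mul_zero (j : Fin (2 * n + 1)) (τ : Equiv.Perm (Fin (2 * n)))
    (h : 2 * ((0 : Fin (n + 1)) : ℕ) < 2 * n + 2) :
    consPair j τ ⟨2 * (0 : Fin (n + 1)), h⟩ = 0 :=
  consPair_zero j τ

lemma consPair_two_mul_zero_add_one (j : Fin (2 * n + 1)) (τ : Equiv.Perm (Fin (2 * n)))
    (h : 2 * ((0 : Fin (n + 1)) : ℕ) + 1 < 2 * n + 2) :
    consPair j τ ⟨2 * (0 : Fin (n + 1)) + 1, h⟩ = j.succ :=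
  consPair_one j τ

lemma consPair_two_mul_succ (j : Fin (2 * n + 1)) (τ : Equiv.Perm (Fin (2 * n))) (i : Fin n)
    (h : 2 * (i.succ : ℕ) < 2 * n + 2) :
    consPair j τ ⟨2 * i.succ, h⟩ = skipPair j (τ ⟨2 * i, by omega⟩) :=
  consPair_succ_succ j τ ⟨2 * i, by omega⟩

lemma consPair_two_mul_succ_add_one (j : Fin (2 * n + 1)) (τ : Equiv.Perm (Fin (2 * n)))
    (i : Fin n) (h : 2 * (i.succ : ℕ) + 1 < 2 * n + 2) :
    consPair j τ ⟨2 * i.succ + 1, h⟩ = skipPair j (τ ⟨2 * i + 1, by omega⟩) :=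
  consPair_succ_succ j τ ⟨2 * i + 1, by omega⟩

lemma consPair_mem_pfMatchings {j : Fin (2 * n + 1)} {τ : Equiv.Perm (Fin (2 * n))} :
    consPair j τ ∈ pfMatchings (n + 1) ↔ τ ∈ pfMatchings n := by
  have skipPair_lt_iff {u v : Fin (2 * n)} :
      @LT.lt (Fin (2 * (n + 1))) _ (skipPair j u) (skipPair j v) ↔ u < v :=
    (skipPair_strictMono j).lt_iff_lt
  have pos_skipPair (u : Fin (2 * n)) :
      @LT.lt (Fin (2 * (n + 1))) _ (0 : Fin (2 * n + 2)) (skipPair j u) :=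
    Fin.pos_of_ne_zero (skipPair_ne_zero j u)
  have pos_succ : @LT.lt (Fin (2 * (n + 1))) _ (0 : Fin (2 * n + 2)) j.succ := Fin.succ_pos j
  simp only [pfMatchings, mem_filter, mem_univ, true_and, Fin.forall_fin_succ,
    consPair_two_mul_zero, consPair_two_mul_zero_add_one, consPair_two_mul_succ,
    consPair_two_mul_succ_add_one, skipPair_lt_iff, pos_skipPair, pos_succ,
    Fin.succ_lt_succ_iff, Fin.not_lt_zero, false_imp_iff, imp_true_iff, true_and]

theorem pf_succ_row_zero {R : Type*} [CommRing R]
    (A : Matrix (Fin (2 * n + 2)) (Fin (2 * n + 2)) R) :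
    pf (n := n + 1) A = ∑ j : Fin (2 * n + 1),
      (-1) ^ (j : ℕ) * A 0 j.succ * pf (A.submatrix (skipPair j) (skipPair j)) := by
  simp only [pf, Finset.mul_sum]
  rw [← Finset.sum_product']
  refine (Finset.sum_nbij (fun p => consPair p.1 p.2) ?_ ?_ ?_ ?_).symm
  · exact fun p hp => consPair_mem_pfMatchings.2 (Finset.mem_product.1 hp).2
  · exact consPair_injective2.uncurry.injOn
  · intro σ hσ
    obtain ⟨j, τ, rfl⟩ := exists_eq_consPair (apply_zero_of_mem_pfMatchings hσ)
    exact ⟨(j, τ), by simpa using consPair_mem_pfMatchings.1 hσ, rfl⟩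
  · rintro ⟨j, τ⟩ -
    rw [sign_consPair, Fin.prod_univ_succ]
    simp only [consPair_two_mul_zero, consPair_two_mul_zero_add_one, consPair_two_mul_succ,
      consPair_two_mul_succ_add_one, Matrix.submatrix_apply]
    push_cast
    ring

end PfaffianExpansion

section DoubleVandermonde

open scoped Matrix

variable {R : Type*} [CommRing R] {n : ℕ}

/-- The maximal minors `x i * y j - x j * y i` of the two-row matrix with rows `x` and `y`. -/
def plucker {ι : Type*} (x y : ι → R) (i j : ι) : R :=
  x i * y j - x j * y i

/-- The matrix with the two blocks `a i * x i ^ (n - 1 - k) * y i ^ k` and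
`b i * x i ^ (n - 1 - k) * y i ^ k`, so that `Vdet` is its determinant; keeping the blocks as the
summands of the column type lets block matrices act on them. -/
def doubleVandermonde {ι : Type*} (n : ℕ) (x y a b : ι → R) : Matrix ι (Fin n ⊕ Fin n) R :=
  Matrix.fromCols (Matrix.of fun i k => a i * Matrix.rectVandermonde y x n i k)
    (Matrix.of fun i k => b i * Matrix.rectVandermonde y x n i k)

/-- The splitting of the columns of `Vdet` into its two blocks. -/
def halvesEquiv (n : ℕ) : Fin (2 * n) ≃ Fin n ⊕ Fin n :=
  (finCongr (two_mul n)).trans finSumFinEquiv.symm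

lemma Vdet_eq_det_doubleVandermonde (x y a b : Fin (2 * n) → R) :
    Vdet n x y a b = ((doubleVandermonde n x y a b).submatrix id (halvesEquiv n)).det := by
  refine congrArg Matrix.det (Matrix.ext fun i j => ?_)
  obtain ⟨k, rfl⟩ := (halvesEquiv n).symm.surjective j
  rw [Matrix.submatrix_apply, Equiv.apply_symm_apply]
  rcases k with k | k
  · have val_left : ((halvesEquiv n).symm (Sum.inl k) : ℕ) = k := rfl
    have rev : n - 1 - (k : ℕ) = k.rev := by rw [Fin.val_rev]; omega
    simp only [Matrix.of_apply, val_left, k.isLt, if_true, rev, id_eq, doubleVandermonde,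
      Matrix.fromCols_apply_inl, Matrix.rectVandermonde_apply]
    ring
  · have val_right : ((halvesEquiv n).symm (Sum.inr k) : ℕ) = n + k := rfl
    have rev : 2 * n - 1 - (n + k : ℕ) = k.rev := by rw [Fin.val_rev]; omega
    simp only [Matrix.of_apply, val_right, not_lt_of_ge (Nat.le_add_right n k), if_false, rev,
      Nat.add_sub_cancel_left, id_eq, doubleVandermonde, Matrix.fromCols_apply_inr,
      Matrix.rectVandermonde_apply]
    ring

lemma doubleVandermonde_map {ι S : Type*} [CommRing S] (φ : R →+* S) (x y a b : ι → R) :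
    (doubleVandermonde n x y a b).map φ =
      doubleVandermonde n (φ ∘ x) (φ ∘ y) (φ ∘ a) (φ ∘ b) := by
  ext i (k | k) <;> simp [doubleVandermonde, Matrix.rectVandermonde_apply]

/-- In the monomial bases, multiplication of binary forms of degree `n - 1` by the linear form
`u * Y - v * X`, preceded by the column of the monomial `X ^ n`. -/
def linearFormMul (n : ℕ) (u v : R) : Matrix (Fin (n + 1)) (Fin (n + 1)) R :=
  (Matrix.of (Fin.cons (Pi.single 0 1)
    fun k : Fin n => Pi.single k.succ u - Pi.single k.castSucc v))ᵀ

lemma linearFormMul_zero (u v : R) (i : Fin (n + 1)) :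
    linearFormMul n u v i 0 = Pi.single (M := fun _ => R) 0 1 i := rfl

lemma linearFormMul_succ (u v : R) (i : Fin (n + 1)) (k : Fin n) :
    linearFormMul n u v i k.succ =
      Pi.single (M := fun _ => R) k.succ u i - Pi.single (M := fun _ => R) k.castSucc v i := rfl

lemma det_linearFormMul (u v : R) : (linearFormMul n u v).det = u ^ n := by
  rw [Matrix.det_of_isUpperTriangular]
  · simp [linearFormMul_zero, linearFormMul_succ, Fin.prod_univ_succ, Fin.castSucc_lt_succ.ne']
  · intro i k (hki : k < i)
    cases k using Fin.cases with
    | zero => simp [linearFormMul_zero, hki.ne']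
    | succ k => simp [linearFormMul_succ, hki.ne', (k.castSucc_lt_succ.trans hki).ne']

lemma rectVandermonde_mul_linearFormMul_zero {ι : Type*} (x y : ι → R) (u v : R) (i : ι) :
    (Matrix.rectVandermonde y x (n + 1) * linearFormMul n u v) i 0 = x i ^ n := by
  simp [Matrix.mul_apply, linearFormMul_zero, Matrix.rectVandermonde_apply, Pi.single_apply]

lemma rectVandermonde_mul_linearFormMul_succ {ι : Type*} (x y : ι → R) (u v : R) (i : ι)
    (k : Fin n) :
    (Matrix.rectVandermonde y x (n + 1) * linearFormMul n u v) i k.succ =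
      (u * y i - x i * v) * Matrix.rectVandermonde y x n i k := by
  have rev_castSucc : (k.castSucc.rev : ℕ) = k.rev + 1 := by simp [Fin.rev_castSucc]
  have rev_succ : (k.succ.rev : ℕ) = k.rev := by simp [Fin.rev_succ]
  simp only [Matrix.mul_apply, linearFormMul_succ, Matrix.rectVandermonde_apply, mul_sub,
    Finset.sum_sub_distrib, Pi.single_apply, mul_ite, mul_zero, Finset.sum_ite_eq',
    Finset.mem_univ, if_true, rev_castSucc, rev_succ, Fin.val_succ, Fin.val_castSucc]
  ring

/-- The columns of `doubleVandermonde (n + 1)`, with the first column of each block moved to the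
end. -/
noncomputable def columnEquiv (n : ℕ) : Fin (2 * n) ⊕ Fin 2 ≃ Fin (n + 1) ⊕ Fin (n + 1) :=
  Equiv.ofBijective
    (Sum.elim (Sum.map Fin.succ Fin.succ ∘ halvesEquiv n) ![Sum.inl 0, Sum.inr 0]) <| by
    refine (Fintype.bijective_iff_injective_and_card _).2 ⟨?_, by simp; omega⟩
    refine Function.Injective.sumElim ?_ ?_ fun k i => ?_
    · exact ((Fin.succ_injective n).sumMap (Fin.succ_injective n)).comp (halvesEquiv n).injective
    · simp [Function.Injective, Fin.forall_fin_two]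
    · rcases h : halvesEquiv n k with l | l <;> fin_cases i <;> simp [h, Fin.succ_ne_zero]

lemma doubleVandermonde_mul_fromBlocks {ι : Type*} (x y a b : ι → R)
    (T : Matrix (Fin n) (Fin n) R) :
    doubleVandermonde n x y a b * Matrix.fromBlocks T 0 0 T =
      Matrix.fromCols (Matrix.of fun i k => a i * (Matrix.rectVandermonde y x n * T) i k)
        (Matrix.of fun i k => b i * (Matrix.rectVandermonde y x n * T) i k) := by
  rw [doubleVandermonde, Matrix.fromCols_mul_fromBlocks, Matrix.mul_zero, Matrix.mul_zero, add_zero,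
    zero_add]
  congr 1 <;> ext i k <;> simp [Matrix.mul_apply, Finset.mul_sum, mul_assoc]

lemma doubleVandermonde_mul_submatrix_columnEquiv {ι : Type*} (x y a b : ι → R) (u v : R) :
    (doubleVandermonde (n + 1) x y a b *
        Matrix.fromBlocks (linearFormMul n u v) 0 0 (linearFormMul n u v)).submatrix
        id (columnEquiv n) =
      Matrix.fromCols
        (Matrix.of fun i k => (u * y i - x i * v) *
          (doubleVandermonde n x y a b).submatrix id (halvesEquiv n) i k)
        (Matrix.of fun i => ![a i * x i ^ n, b i * x i ^ n]) := by
  rw [doubleVandermonde_mul_fromBlocks]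
  ext i (k | k)
  · have column_left : columnEquiv n (Sum.inl k) =
        Sum.map Fin.succ Fin.succ (halvesEquiv n k) := rfl
    rcases h : halvesEquiv n k with l | l <;>
      simp [column_left, h, doubleVandermonde, rectVandermonde_mul_linearFormMul_succ,
        mul_left_comm]
  · fin_cases k <;> simp [columnEquiv, rectVandermonde_mul_linearFormMul_zero]

/-- The operation `linearFormMul u v` multiplies each row by the linear form vanishing at the common
point `(u, v)` of the last two rows, so in those only the last two columns survive. -/
lemma det_doubleVandermonde_mul_pow (x y a b : Fin (2 * n) ⊕ Fin 2 → R)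
    (hx : x (Sum.inr 0) = x (Sum.inr 1)) (hy : y (Sum.inr 0) = y (Sum.inr 1)) :
    ((doubleVandermonde (n + 1) x y a b).submatrix id (columnEquiv n)).det *
        x (Sum.inr 1) ^ (2 * n) =
      (∏ k, plucker x y (Sum.inr 1) (Sum.inl k)) *
        Vdet n (x ∘ Sum.inl) (y ∘ Sum.inl) (a ∘ Sum.inl) (b ∘ Sum.inl) *
        plucker a b (Sum.inr 0) (Sum.inr 1) * x (Sum.inr 1) ^ (2 * n) := by
  set u := x (Sum.inr 1) with hu
  set v := y (Sum.inr 1) with hv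
  set T := linearFormMul n u v
  have det_T : (Matrix.fromBlocks T 0 0 T).det = u ^ (2 * n) := by
    rw [Matrix.det_fromBlocks_zero₂₁, det_linearFormMul, two_mul, pow_add]
  have block_form : (doubleVandermonde (n + 1) x y a b * Matrix.fromBlocks T 0 0 T).submatrix
      id (columnEquiv n) =
      Matrix.fromBlocks
        (Matrix.of fun i k => plucker x y (Sum.inr 1) (Sum.inl i) *
          (doubleVandermonde n (x ∘ Sum.inl) (y ∘ Sum.inl) (a ∘ Sum.inl) (b ∘ Sum.inl)).submatrix
            id (halvesEquiv n) i k)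
        (Matrix.of fun i => ![a (Sum.inl i) * x (Sum.inl i) ^ n, b (Sum.inl i) * x (Sum.inl i) ^ n])
        0
        (Matrix.of fun i => ![a (Sum.inr i) * u ^ n, b (Sum.inr i) * u ^ n]) := by
    rw [doubleVandermonde_mul_submatrix_columnEquiv]
    ext (i | i) (k | k)
    · rfl
    · rfl
    · fin_cases i <;> simp [hx, hy, ← hu, ← hv, mul_comm]
    · fin_cases i <;> simp [hx, ← hu]
  calc
    _ = ((doubleVandermonde (n + 1) x y a b * Matrix.fromBlocks T 0 0 T).submatrix
          id (columnEquiv n)).det := by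
      rw [← det_T, ← Matrix.det_submatrix_equiv_self (columnEquiv n) (Matrix.fromBlocks T 0 0 T),
        ← Matrix.det_mul, Matrix.submatrix_mul_equiv]
    _ = _ := by
      rw [block_form, Matrix.det_fromBlocks_zero₂₁, Matrix.det_mul_column,
        ← Vdet_eq_det_doubleVandermonde, Matrix.det_fin_two, plucker]
      simp only [Matrix.of_apply, Matrix.cons_val_zero, Matrix.cons_val_one]
      ring

lemma det_doubleVandermonde_of_eq (x y a b : Fin (2 * n) ⊕ Fin 2 → R)
    (hx : x (Sum.inr 0) = x (Sum.inr 1)) (hy : y (Sum.inr 0) = y (Sum.inr 1)) :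
    ((doubleVandermonde (n + 1) x y a b).submatrix id (columnEquiv n)).det =
      (∏ k, plucker x y (Sum.inr 1) (Sum.inl k)) *
        Vdet n (x ∘ Sum.inl) (y ∘ Sum.inl) (a ∘ Sum.inl) (b ∘ Sum.inl) *
        plucker a b (Sum.inr 0) (Sum.inr 1) := by
  -- Shifting `x` by an indeterminate makes the power of `x (Sum.inr 1)` cancellable.
  open Polynomial in
  have collapse_mul_pow := det_doubleVandermonde_mul_pow (R := R[X]) (fun i => X + C (x i)) (C ∘ y)
    (C ∘ a) (C ∘ b) (by rw [hx]) (congrArg C hy)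
  have collapse :=
    ((Polynomial.monic_X_add_C (x (Sum.inr 1))).pow (2 * n)).isRegular.right collapse_mul_pow
  have collapse_at_zero := congrArg (Polynomial.evalRingHom 0) collapse
  simp only [Vdet_eq_det_doubleVandermonde, RingHom.map_det, RingHom.mapMatrix_apply,
    ← Matrix.submatrix_map, doubleVandermonde_map, map_mul, map_prod, plucker, map_sub]
    at collapse_at_zero ⊢
  simpa [Function.comp_def] using collapse_at_zero

end DoubleVandermonde

lemma det_submatrix_equiv_mul_det_submatrix_equiv {m n R : Type*} [Fintype m] [DecidableEq m]
    [Fintype n] [DecidableEq n] [CommRing R] (e f : m ≃ n) (A B : Matrix n n R) :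
    (A.submatrix e f).det * (B.submatrix e f).det = A.det * B.det := by
  have det_submatrix (M : Matrix n n R) :
      (M.submatrix e f).det = Equiv.Perm.sign (f.symm.trans e) * M.det := by
    rw [← Matrix.det_permute, ← Matrix.det_submatrix_equiv_self f]
    simp [Function.comp_def, Matrix.submatrix_submatrix]
  rw [det_submatrix, det_submatrix, mul_mul_mul_comm, ← Int.cast_mul, ← Units.val_mul,
    Int.units_mul_self, Units.val_one, Int.cast_one, one_mul]

lemma Vdet_mul_Vdet_of_eq {R : Type*} [CommRing R] {n : ℕ} (j : Fin (2 * n + 1))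
    (x y a b c d : Fin (2 * n + 2) → R) (hx : x 0 = x j.succ) (hy : y 0 = y j.succ) :
    Vdet (n + 1) x y a b * Vdet (n + 1) x y c d =
      plucker a b 0 j.succ * plucker c d 0 j.succ *
        (Vdet n (x ∘ skipPair j) (y ∘ skipPair j) (a ∘ skipPair j) (b ∘ skipPair j) *
          Vdet n (x ∘ skipPair j) (y ∘ skipPair j) (c ∘ skipPair j) (d ∘ skipPair j)) *
        (∏ k, plucker x y j.succ (skipPair j k)) * ∏ k, plucker x y 0 (skipPair j k) := by
  let e := skipPairEquiv j
  have collapse (a b : Fin (2 * n + 2) → R) :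
      ((doubleVandermonde (n + 1) x y a b).submatrix e (columnEquiv n)).det =
        (∏ k, plucker x y j.succ (skipPair j k)) *
          Vdet n (x ∘ skipPair j) (y ∘ skipPair j) (a ∘ skipPair j) (b ∘ skipPair j) *
          plucker a b 0 j.succ :=
    det_doubleVandermonde_of_eq (x ∘ e) (y ∘ e) (a ∘ e) (b ∘ e) hx hy
  have plucker_eq (i) : plucker x y 0 i = plucker x y j.succ i := by simp only [plucker, hx, hy]
  have reorder_columns (a b : Fin (2 * n + 2) → R) :
      ((doubleVandermonde (n + 1) x y a b).submatrix id (halvesEquiv (n + 1))).submatrix e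
          ((columnEquiv n).trans (halvesEquiv (n + 1)).symm) =
        (doubleVandermonde (n + 1) x y a b).submatrix e (columnEquiv n) := by
    ext
    simp
  rw [Vdet_eq_det_doubleVandermonde, Vdet_eq_det_doubleVandermonde,
    ← det_submatrix_equiv_mul_det_submatrix_equiv e
      ((columnEquiv n).trans (halvesEquiv (n + 1)).symm),
    reorder_columns, reorder_columns, collapse, collapse]
  simp only [plucker_eq]
  ring

section BinaryForms

/-- The binary forms of degree `d`, as functions of the pair of variables. -/
def binaryForms (R : Type*) [CommRing R] (d : ℕ) : Submodule R (R × R → R) :=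
  Submodule.span R <| Set.range fun (k : Fin (d + 1)) (p : R × R) =>
    p.1 ^ (k.rev : ℕ) * p.2 ^ (k : ℕ)

variable {R : Type*} [CommRing R]

lemma monomial_mem_binaryForms {k l d : ℕ} (h : k + l = d) :
    (fun p : R × R => p.1 ^ k * p.2 ^ l) ∈ binaryForms R d := by
  refine Submodule.subset_span ⟨⟨l, by omega⟩, funext fun p => ?_⟩
  have : d + 1 - (l + 1) = k := by omega
  simp only [Fin.val_rev, this]

lemma mul_mem_binaryForms {d e : ℕ} {f g : R × R → R} (hf : f ∈ binaryForms R d)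
    (hg : g ∈ binaryForms R e) : f * g ∈ binaryForms R (d + e) := by
  have hfg := Submodule.mul_mem_mul hf hg
  rw [binaryForms, binaryForms, Submodule.span_mul_span] at hfg
  refine Submodule.span_le.2 ?_ hfg
  rintro _ ⟨_, ⟨k, rfl⟩, _, ⟨l, rfl⟩, rfl⟩
  dsimp only
  rw [SetLike.mem_coe]
  have mem := monomial_mem_binaryForms (R := R) (k := k.rev + l.rev) (l := k + l) (d := d + e)
    (by simp only [Fin.val_rev]; omega)
  have prod_monomial : (fun p : R × R => p.1 ^ (k.rev : ℕ) * p.2 ^ (k : ℕ)) *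
      (fun p => p.1 ^ (l.rev : ℕ) * p.2 ^ (l : ℕ)) =
        fun p => p.1 ^ (k.rev + l.rev : ℕ) * p.2 ^ (k + l : ℕ) := by
    ext p
    simp only [Pi.mul_apply]
    ring
  rwa [prod_monomial]

lemma linear_mem_binaryForms (u v : R) :
    (fun p : R × R => p.1 * v - u * p.2) ∈ binaryForms R 1 := by
  have hX := monomial_mem_binaryForms (R := R) (k := 1) (l := 0) (d := 1) rfl
  have hY := monomial_mem_binaryForms (R := R) (k := 0) (l := 1) (d := 1) rfl
  convert sub_mem ((binaryForms R 1).smul_mem v hX) ((binaryForms R 1).smul_mem u hY) using 1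
  ext p
  simp [mul_comm]

lemma prod_linear_mem_binaryForms {d : ℕ} (u v : Fin d → R) :
    (fun p : R × R => ∏ k, (p.1 * v k - u k * p.2)) ∈ binaryForms R d := by
  induction d with
  | zero => simpa using monomial_mem_binaryForms (R := R) (k := 0) (l := 0) rfl
  | succ d ih =>
    convert mul_mem_binaryForms (ih (u ∘ Fin.castSucc) (v ∘ Fin.castSucc))
      (linear_mem_binaryForms (u (Fin.last d)) (v (Fin.last d))) using 1
    ext p
    simp [Fin.prod_univ_castSucc]

lemma eq_zero_of_mem_binaryForms [IsDomain R] {d : ℕ} {f : R × R → R} (hf : f ∈ binaryForms R d)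
    (x y : Fin (d + 1) → R) (hxy : Pairwise fun i j => plucker x y i j ≠ 0)
    (hroot : ∀ i, f (x i, y i) = 0) : f = 0 := by
  obtain ⟨c, rfl⟩ := (Submodule.mem_span_range_iff_exists_fun _).1 hf
  suffices c = 0 by simp [this]
  refine Matrix.eq_zero_of_mulVec_eq_zero (M := Matrix.projVandermonde y x) ?_ ?_
  · rw [Matrix.det_projVandermonde]
    refine prod_ne_zero_iff.2 fun i _ => prod_ne_zero_iff.2 fun j hj => ?_
    rw [mul_comm (y j), mul_comm (y i)]
    exact hxy (mem_Ioi.1 hj).ne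
  · ext i
    rw [Pi.zero_apply, ← hroot i]
    simp [Matrix.mulVec, dotProduct, Matrix.projVandermonde_apply, mul_comm]

lemma eq_sum_of_mem_binaryForms [IsDomain R] {d : ℕ} {f : R × R → R} (hf : f ∈ binaryForms R d)
    (x y : Fin (d + 1) → R) (hxy : Pairwise fun i j => plucker x y i j ≠ 0) (r : Fin (d + 1) → R)
    (hr : ∀ j, f (x j, y j) = r j * ∏ k, plucker x y j (j.succAbove k)) (p : R × R) :
    f p = ∑ j, r j * ∏ k, (p.1 * y (j.succAbove k) - x (j.succAbove k) * p.2) := by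
  let nodal (j : Fin (d + 1)) (p : R × R) : R :=
    ∏ k, (p.1 * y (j.succAbove k) - x (j.succAbove k) * p.2)
  have sum_mem : ∑ j, r j • nodal j ∈ binaryForms R d :=
    Submodule.sum_mem _ fun j _ => Submodule.smul_mem _ _ (prod_linear_mem_binaryForms _ _)
  have nodal_apply_of_ne {j m : Fin (d + 1)} (hjm : j ≠ m) : nodal j (x m, y m) = 0 := by
    obtain ⟨k, hk⟩ := Fin.exists_succAbove_eq hjm.symm
    refine prod_eq_zero (mem_univ k) ?_
    rw [hk, sub_self]
  have f_eq : f = ∑ j, r j • nodal j := by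
    refine sub_eq_zero.1 (eq_zero_of_mem_binaryForms (sub_mem hf sum_mem) x y hxy fun m => ?_)
    simp only [Pi.sub_apply, Finset.sum_apply, Pi.smul_apply, smul_eq_mul]
    rw [sum_eq_single m (fun j _ hjm => by rw [nodal_apply_of_ne hjm, mul_zero]) (by simp), hr,
      sub_eq_zero]
    rfl
  simpa [nodal] using congrFun f_eq p

lemma doubleVandermonde_update_mem_binaryForms {ι : Type*} [DecidableEq ι] {n : ℕ}
    (x y a b : ι → R) (i : ι) (j : Fin (n + 1) ⊕ Fin (n + 1)) :
    (fun p : R × R => doubleVandermonde (n + 1) (Function.update x i p.1) (Function.update y i p.2)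
      a b i j) ∈ binaryForms R n := by
  have mem (r : R) (k : Fin (n + 1)) :
      (fun p : R × R => r * (p.2 ^ (k : ℕ) * p.1 ^ (k.rev : ℕ))) ∈ binaryForms R n := by
    convert (binaryForms R n).smul_mem r
      (monomial_mem_binaryForms (R := R) (k := k.rev) (l := k) (by rw [Fin.val_rev]; omega)) using 1
    ext p
    simp [mul_comm]
  rcases j with k | k <;> simpa [doubleVandermonde, Matrix.rectVandermonde_apply] using mem _ k

lemma Vdet_update_mem_binaryForms {n : ℕ} (x y a b : Fin (2 * n + 2) → R) :
    (fun p : R × R => Vdet (n + 1) (Function.update x 0 p.1) (Function.update y 0 p.2) a b) ∈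
      binaryForms R n := by
  let e := halvesEquiv (n + 1)
  let minor (j : Fin (2 * n + 2)) : R :=
    ((doubleVandermonde (n + 1) x y a b).submatrix Fin.succ (e ∘ j.succAbove)).det
  have minor_eq (p : R × R) (j : Fin (2 * n + 2)) :
      ((doubleVandermonde (n + 1) (Function.update x 0 p.1) (Function.update y 0 p.2)
        a b).submatrix Fin.succ (e ∘ j.succAbove)).det = minor j := by
    refine congrArg Matrix.det (Matrix.ext fun i k => ?_)
    rcases h : e (j.succAbove k) with l | l <;>
      simp [h, doubleVandermonde, Matrix.rectVandermonde_apply]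
  have expansion : (fun p : R × R =>
      Vdet (n + 1) (Function.update x 0 p.1) (Function.update y 0 p.2) a b) =
      ∑ j : Fin (2 * n + 2), ((-1) ^ (j : ℕ) * minor j) • fun p : R × R =>
        doubleVandermonde (n + 1) (Function.update x 0 p.1) (Function.update y 0 p.2) a b
          0 (e j) := by
    ext p
    rw [Vdet_eq_det_doubleVandermonde]
    refine (Matrix.det_succ_row_zero (n := 2 * n + 1) _).trans ?_
    simp only [Matrix.submatrix_submatrix, Function.id_comp, Matrix.submatrix_apply, id_eq,
      Finset.sum_apply, Pi.smul_apply, smul_eq_mul]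
    refine Finset.sum_congr rfl fun j _ => ?_
    rw [← minor_eq p j]
    exact mul_right_comm _ _ _
  rw [expansion]
  exact Submodule.sum_mem _ fun j _ =>
    Submodule.smul_mem _ _ (doubleVandermonde_update_mem_binaryForms x y a b 0 (e j))

end BinaryForms

lemma Vdet_mul_Vdet_eq_sum {R : Type*} [CommRing R] [IsDomain R] {n : ℕ}
    (x y a b c d : Fin (2 * n + 2) → R)
    (hxy : Pairwise fun i k : Fin (2 * n + 1) => plucker x y i.succ k.succ ≠ 0) :
    Vdet (n + 1) x y a b * Vdet (n + 1) x y c d =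
      ∑ j : Fin (2 * n + 1), plucker a b 0 j.succ * plucker c d 0 j.succ *
        (Vdet n (x ∘ skipPair j) (y ∘ skipPair j) (a ∘ skipPair j) (b ∘ skipPair j) *
          Vdet n (x ∘ skipPair j) (y ∘ skipPair j) (c ∘ skipPair j) (d ∘ skipPair j)) *
        (∏ k, plucker x y j.succ (skipPair j k)) * ∏ k, plucker x y 0 (skipPair j k) := by
  let coeff (j : Fin (2 * n + 1)) : R := plucker a b 0 j.succ * plucker c d 0 j.succ *
    (Vdet n (x ∘ skipPair j) (y ∘ skipPair j) (a ∘ skipPair j) (b ∘ skipPair j) *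
      Vdet n (x ∘ skipPair j) (y ∘ skipPair j) (c ∘ skipPair j) (d ∘ skipPair j)) *
    ∏ k, plucker x y j.succ (skipPair j k)
  let product (p : R × R) : R :=
    Vdet (n + 1) (Function.update x 0 p.1) (Function.update y 0 p.2) a b *
      Vdet (n + 1) (Function.update x 0 p.1) (Function.update y 0 p.2) c d
  have product_mem : product ∈ binaryForms R (2 * n) := by
    rw [two_mul]
    exact mul_mem_binaryForms (Vdet_update_mem_binaryForms x y a b)
      (Vdet_update_mem_binaryForms x y c d)
  have product_apply_node (j : Fin (2 * n + 1)) :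
      product (x j.succ, y j.succ) = coeff j * ∏ k, plucker x y j.succ (skipPair j k) := by
    have h := Vdet_mul_Vdet_of_eq j (Function.update x 0 (x j.succ))
      (Function.update y 0 (y j.succ)) a b c d (by simp) (by simp)
    simpa [skipPair, plucker, Function.comp_def, product, coeff] using h
  have interpolation := eq_sum_of_mem_binaryForms product_mem (x ∘ Fin.succ) (y ∘ Fin.succ) hxy
    coeff product_apply_node (x 0, y 0)
  simpa [product, coeff, plucker, skipPair] using interpolation

theorem pf_eq_Vdet_t_general {F : Type*} [Field F] (n : ℕ) (x y a b c d : Fin (2 * n) → F)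
    (hxy : Pairwise fun i j => plucker x y i j ≠ 0) :
    pf (Matrix.of fun i j => plucker a b i j * plucker c d i j / plucker x y i j) =
      Vdet n x y a b * Vdet n x y c d / ∏ i, ∏ j ∈ Ioi i, plucker x y i j := by
  induction n with
  | zero => simp [pf, Vdet, pfMatchings]
  | succ n ih =>
    have hroots : Pairwise fun i k : Fin (2 * n + 1) => plucker x y i.succ k.succ ≠ 0 :=
      hxy.comp_of_injective (Fin.succ_injective _)
    refine (pf_succ_row_zero _).trans ?_
    rw [Vdet_mul_Vdet_eq_sum x y a b c d hroots, Finset.sum_div]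
    refine Finset.sum_congr rfl fun j _ => ?_
    have ihj := ih (x ∘ skipPair j) (y ∘ skipPair j) (a ∘ skipPair j) (b ∘ skipPair j)
      (c ∘ skipPair j) (d ∘ skipPair j) (hxy.comp_of_injective (skipPair_strictMono j).injective)
    exact (congrArg (_ * ·) ihj).trans <|
      neg_one_pow_mul_div_mul_div_prod_Ioi_skipPair j (plucker x y)
        (fun _ _ => (neg_sub _ _).symm) hxy _ _

/-- Corollary `cor:pfaff-det`, first identity:
`Pf[ (a_i b_j − a_j b_i)(c_i d_j − c_j d_i)/((x_i − x_j)(1 − t x_i x_j)) ]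
  = V^n(X,1+tX²;A,B) V^n(X,1+tX²;C,D) / Π_{i<j}(x_i − x_j)(1 − t x_i x_j)`. -/
theorem pf_eq_Vdet_t (F : Type*) [Field F] (n : ℕ) (hn : 1 ≤ n)
    (x a b c d : Fin (2 * n) → F) (t : F)
    (hx : Function.Injective x)
    (ht : ∀ i j : Fin (2 * n), i ≠ j → 1 - t * x i * x j ≠ 0) :
    pf (Matrix.of fun i j : Fin (2 * n) =>
        (a i * b j - a j * b i) * (c i * d j - c j * d i) /
          ((x i - x j) * (1 - t * x i * x j))) =
      Vdet n x (fun i => 1 + t * x i ^ 2) a b * Vdet n x (fun i => 1 + t * x i ^ 2) c d /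
        ∏ i : Fin (2 * n), ∏ j ∈ Ioi i, (x i - x j) * (1 - t * x i * x j) := by
  have factor (i j) : (x i - x j) * (1 - t * x i * x j) =
      plucker x (fun i => 1 + t * x i ^ 2) i j := by
    rw [plucker]
    ring
  simp only [factor]
  refine pf_eq_Vdet_t_general n x _ a b c d fun i j hij => ?_
  change plucker x _ i j ≠ 0
  rw [← factor]
  exact mul_ne_zero (sub_ne_zero.2 (hx.ne hij)) (ht i j hij)
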